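/- arXiv:2504.09591 — 4 statements merged into one kernel-verified Lean document; each statement's English description precedes it below -/
import Mathlib

section
/- Assume (8−6ε²)·αᵢ·αⱼ − ε²·(αᵢ² + αⱼ²) < 0. Then the quadratic U(p,q) = w₁·p² + w₂·p·q + w₃·q² + w₄·p + w₅·q + w₆, with w₁ = −αᵢ·(2−ε²)/2, w₂ = ε·(αᵢ+αⱼ)/2, w₃ = −αⱼ/2, has no local maximum on ℝ²: for every set S ⊆ ℝ² and every point (p₀,q₀) in the interior of S, there exists (p,q) ∈ S with U(p,q) > U(p₀,q₀). In particular, any maximizer of U over S lies on the boundary of S. (This is the content of Lemma 1: under this parameter condition the coalition's optimum cannot be an interior point where both units earn positive profits, so it is optimal to operate at loss, at par, or at maximum price.) -/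
/-!
In the second difference `f (x + w) + f (x - w) - 2 * f x` of a quadratic function `f` the affine
part cancels, leaving twice the value of the quadratic part at `w`. At a local maximum this is
nonpositive for small `w`, hence, by homogeneity, the quadratic part is nonpositive everywhere. But
a binary form of positive discriminant takes a positive value, and for the coalition's profit four
times the discriminant is `ε² (αᵢ² + αⱼ²) - (8 - 6 ε²) αᵢ αⱼ`.
-/

open Filter Topology

theorem eventually_add_sub_le_of_isLocalMax {E β : Type*} [AddGroup E] [TopologicalSpace E]
    [IsTopologicalAddGroup E] [AddCommMonoid β] [Preorder β] [IsOrderedAddMonoid β]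
    {f : E → β} {x : E} (hx : IsLocalMax f x) :
    ∀ᶠ w in 𝓝 0, f (x + w) + f (x - w) ≤ f x + f x := by
  have hadd : Tendsto (fun w ↦ x + w) (𝓝 0) (𝓝 x) :=
    Continuous.tendsto' (by fun_prop) 0 x (add_zero x)
  have hsub : Tendsto (fun w ↦ x - w) (𝓝 0) (𝓝 x) :=
    Continuous.tendsto' (by fun_prop) 0 x (sub_zero x)
  filter_upwards [hadd.eventually hx, hsub.eventually hx] with w using add_le_add

theorem quadraticMap_parallelogram_law {R M N : Type*} [CommRing R] [AddCommGroup M]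
    [AddCommGroup N] [Module R M] [Module R N] (Q : QuadraticMap R M N) (x y : M) :
    Q (x + y) + Q (x - y) = 2 • (Q x + Q y) := by
  rw [sub_eq_add_neg, QuadraticMap.map_add Q, QuadraticMap.map_add Q, QuadraticMap.map_neg,
    QuadraticMap.polar_neg_right]
  abel

theorem quadraticForm_nonpos_of_isLocalMax {𝕜 E : Type*} [Field 𝕜] [LinearOrder 𝕜]
    [IsStrictOrderedRing 𝕜] [TopologicalSpace 𝕜] [OrderTopology 𝕜] [AddCommGroup E] [Module 𝕜 E]
    [TopologicalSpace E] [IsTopologicalAddGroup E] [ContinuousSMul 𝕜 E] {Q : QuadraticForm 𝕜 E}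
    {l : E →ₗ[𝕜] 𝕜} {k : 𝕜} {x : E} (hx : IsLocalMax (fun y ↦ Q y + l y + k) x) (v : E) :
    Q v ≤ 0 := by
  have hline : Tendsto (fun t : 𝕜 ↦ t • v) (𝓝[>] 0) (𝓝 0) :=
    (Continuous.tendsto' (by fun_prop) 0 0 (zero_smul 𝕜 v)).mono_left nhdsWithin_le_nhds
  obtain ⟨t, hle, ht⟩ := ((hline.eventually (eventually_add_sub_le_of_isLocalMax hx)).and
    eventually_mem_nhdsWithin).exists
  have hparallelogram : Q (x + t • v) + Q (x - t • v) = 2 * (Q x + t * t * Q v) := by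
    rw [quadraticMap_parallelogram_law, QuadraticMap.map_smul, two_nsmul, smul_eq_mul, two_mul]
  have hscaled : t * t * Q v ≤ 0 := by
    rw [map_add l, map_sub l] at hle
    linarith
  exact nonpos_of_mul_nonpos_right hscaled (mul_pos ht ht)

/-- The binary quadratic form `a x² + b x y + c y²`, the second-order part of a quadratic polynomial
in two variables. The coefficient of `x y` is `b`, not `2 b`, so that the discriminant of the form
is `discrim a b c`. -/
def binaryQuadraticForm {R : Type*} [CommRing R] (a b c : R) : QuadraticForm R (R × R) :=
  a • .linMulLin (.fst R R R) (.fst R R R) + b • .linMulLin (.fst R R R) (.snd R R R) +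
    c • .linMulLin (.snd R R R) (.snd R R R)

theorem binaryQuadraticForm_apply {R : Type*} [CommRing R] (a b c : R) (v : R × R) :
    binaryQuadraticForm a b c v = a * v.1 ^ 2 + b * v.1 * v.2 + c * v.2 ^ 2 := by
  simp only [binaryQuadraticForm, add_apply, smul_apply, QuadraticMap.linMulLin_apply,
    LinearMap.fst_apply, LinearMap.snd_apply, smul_eq_mul]
  ring

theorem exists_binaryQuadraticForm_pos {R : Type*} [CommRing R] [LinearOrder R]
    [IsStrictOrderedRing R] {a b c : R} (h : 0 < discrim a b c) :
    ∃ v, 0 < binaryQuadraticForm a b c v := by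
  simp only [binaryQuadraticForm_apply]
  rcases lt_trichotomy a 0 with ha | rfl | ha
  · have hvalue : a * b ^ 2 + b * b * (-2 * a) + c * (-2 * a) ^ 2 = -a * discrim a b c := by
      rw [discrim]
      ring
    exact ⟨(b, -2 * a), hvalue ▸ mul_pos (neg_pos.mpr ha) h⟩
  · have hvalue : 0 * (1 - c) ^ 2 + b * (1 - c) * b + c * b ^ 2 = discrim 0 b c := by
      rw [discrim]
      ring
    exact ⟨(1 - c, b), hvalue ▸ h⟩
  · exact ⟨(1, 0), by simpa using ha⟩

theorem stmt7_general {𝕜 : Type*} [Field 𝕜] [LinearOrder 𝕜] [IsStrictOrderedRing 𝕜]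
    [TopologicalSpace 𝕜] [OrderTopology 𝕜] {w1 w2 w3 w4 w5 w6 : 𝕜} (hdiscrim : 0 < discrim w1 w2 w3)
    {U : 𝕜 → 𝕜 → 𝕜}
    (hU : ∀ p q, U p q = w1 * p ^ 2 + w2 * p * q + w3 * q ^ 2 + w4 * p + w5 * q + w6)
    (S : Set (𝕜 × 𝕜)) (p₀ q₀ : 𝕜) (hS : (p₀, q₀) ∈ interior S) :
    ∃ x ∈ S, U p₀ q₀ < U x.1 x.2 := by
  obtain ⟨v, hv⟩ := exists_binaryQuadraticForm_pos hdiscrim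
  let l : 𝕜 × 𝕜 →ₗ[𝕜] 𝕜 := w4 • .fst 𝕜 𝕜 𝕜 + w5 • .snd 𝕜 𝕜 𝕜
  have hUform : (fun x : 𝕜 × 𝕜 ↦ U x.1 x.2) =
      fun x ↦ binaryQuadraticForm w1 w2 w3 x + l x + w6 := by
    funext x
    simp [hU, binaryQuadraticForm_apply, l, add_assoc]
  by_contra! hmax
  have hlocal : IsLocalMax (fun x : 𝕜 × 𝕜 ↦ U x.1 x.2) (p₀, q₀) :=
    IsMaxOn.isLocalMax hmax (mem_interior_iff_mem_nhds.mp hS)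
  rw [hUform] at hlocal
  exact (quadraticForm_nonpos_of_isLocalMax hlocal v).not_gt hv

/-- If `(8−6ε²)·αᵢ·αⱼ − ε²·(αᵢ² + αⱼ²) < 0`, the quadratic `U(p,q)`
has no local maximum on ℝ²: for every `S ⊆ ℝ²` and every point `(p₀,q₀)` in the
interior of `S`, there exists `(p,q) ∈ S` with `U(p,q) > U(p₀,q₀)`. -/
theorem stmt7 (ai aj ε : ℝ)
    (hai : 0 < ai) (haj : 0 < aj) (hε0 : 0 < ε) (hε1 : ε ≤ 1)
    (w1 w2 w3 w4 w5 w6 : ℝ)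
    (hw1 : w1 = -(ai * (2 - ε ^ 2)) / 2)
    (hw2 : w2 = ε * (ai + aj) / 2)
    (hw3 : w3 = -aj / 2)
    (hneg : (8 - 6 * ε ^ 2) * ai * aj - ε ^ 2 * (ai ^ 2 + aj ^ 2) < 0)
    (U : ℝ → ℝ → ℝ)
    (hU : ∀ p q, U p q = w1 * p ^ 2 + w2 * p * q + w3 * q ^ 2 + w4 * p + w5 * q + w6) :
    ∀ S : Set (ℝ × ℝ), ∀ p₀ q₀ : ℝ, (p₀, q₀) ∈ interior S →
      ∃ x ∈ S, U p₀ q₀ < U x.1 x.2 := by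
  have hdiscrim : 0 < discrim w1 w2 w3 := by rw [discrim, hw1, hw2, hw3]; linarith
  exact stmt7_general hdiscrim hU
end

section
/- For every ε with 0 < ε ≤ 1 there exists a threshold γ̄ ≥ 1, depending only on ε, such that for all αᵢ, αⱼ > 0 satisfying max{αᵢ, αⱼ}/min{αᵢ, αⱼ} > γ̄, one has (8−6ε²)·αᵢ·αⱼ − ε²·(αᵢ² + αⱼ²) < 0. (Hence when the reputation factors of the two units are sufficiently asymmetric, operating both profitably is not an optimal choice.) -/
/-!
In the quadratic form `b x y - c (x² + y²)` the mixed term equals `b · min x y · max x y`, while the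
square terms contribute at least `c (max x y)²`. The latter wins as soon as
`max x y / min x y > b / c`.
-/

section OrderedRing

variable {R : Type*} [CommRing R] [LinearOrder R] [IsStrictOrderedRing R] {b c x y : R}

theorem mul_mul_lt_mul_sq_add_sq_of_mul_min_lt_mul_max (hc : 0 ≤ c) (hmax : 0 < max x y)
    (h : b * min x y < c * max x y) : b * x * y < c * (x ^ 2 + y ^ 2) :=
  calc
    b * x * y = b * min x y * max x y := by rw [mul_assoc, mul_assoc, min_mul_max]
    _ < c * max x y * max x y := by gcongr
    _ = c * max x y ^ 2 := by ring
    _ ≤ c * (min x y ^ 2 + max x y ^ 2) := by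
      gcongr
      exact le_add_of_nonneg_left (sq_nonneg _)
    _ = c * (x ^ 2 + y ^ 2) := by rw [fn_min_add_fn_max (· ^ 2)]

end OrderedRing

section OrderedField

variable {K : Type*} [Field K] [LinearOrder K] [IsStrictOrderedRing K]

theorem mul_mul_lt_mul_sq_add_sq_of_div_lt_max_div_min {b c x y : K} (hc : 0 < c)
    (hx : 0 < x) (hy : 0 < y) (h : b / c < max x y / min x y) :
    b * x * y < c * (x ^ 2 + y ^ 2) := by
  have hcross : b * min x y < max x y * c := (div_lt_div_iff₀ hc (lt_min hx hy)).1 h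
  exact mul_mul_lt_mul_sq_add_sq_of_mul_min_lt_mul_max hc.le (lt_max_of_lt_left hx)
    (hcross.trans_eq (mul_comm _ _))

theorem stmt9_general (b : K) {c : K} (hc : 0 < c) :
    ∃ γbar : K, 1 ≤ γbar ∧
      ∀ x y : K, 0 < x → 0 < y → max x y / min x y > γbar →
        b * x * y - c * (x ^ 2 + y ^ 2) < 0 := by
  refine ⟨max 1 (b / c), le_max_left _ _, fun x y hx hy h ↦ sub_neg.2 ?_⟩
  exact mul_mul_lt_mul_sq_add_sq_of_div_lt_max_div_min hc hx hy ((le_max_right _ _).trans_lt h)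

end OrderedField

/-- For every `ε ∈ (0,1]` there exists `γ̄ ≥ 1`, depending only on `ε`,
such that for all `αᵢ, αⱼ > 0` with `max{αᵢ,αⱼ}/min{αᵢ,αⱼ} > γ̄`, one has
`(8−6ε²)·αᵢ·αⱼ − ε²·(αᵢ² + αⱼ²) < 0`. -/
theorem stmt9 :
    ∀ ε : ℝ, 0 < ε → ε ≤ 1 →
      ∃ γbar : ℝ, 1 ≤ γbar ∧
        ∀ ai aj : ℝ, 0 < ai → 0 < aj →
          max ai aj / min ai aj > γbar →
          (8 - 6 * ε ^ 2) * ai * aj - ε ^ 2 * (ai ^ 2 + aj ^ 2) < 0 :=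
  fun ε hε _ ↦ stmt9_general (8 - 6 * ε ^ 2) (pow_pos hε 2)
end

section
/- Theorem 1(i). Assume all parameters positive, 0 < ε < 1, assumption A.1 (d̄ᵢ ≥ αᵢ·(C_S + Cᵢ) + 2·√(αᵢ·(O_S + Oᵢ)) and d̄ⱼ ≥ αⱼ·(C_S + Cⱼ) + 2·max{√(2·αⱼ·(O_S + Oᵢ)), √(αⱼ·Oⱼ)}), assumption A.2 (ε ≤ 2·√(αⱼ·Oⱼ)/(αⱼ·Cᵢ)), and 4·w₁·w₃ − w₂² ≠ 0. If the stationary point (p*_co, q*_co) lies in the topological interior of F_co⁺, then U(p,q) ≤ U(p*_co, q*_co) for every (p,q) ∈ F_co⁺; i.e., the maximum of the coalition's co-existence utility over F_co⁺ is attained at (p*_co, q*_co). -/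
/-!
Let `m`, `n` be the margins of the coalition on its retail and its wholesale product. Its demands
are affine in `(m, n)`, and the two first-order conditions combine to
`(own₁ * own₂ - cross₁ * cross₂) * m = own₂ * quantity₁ + cross₂ * quantity₂`, so feasibility of
the stationary point forces `0 < m` there. Cramer's rule gives
`(4 * own₁ * own₂ - (cross₁ + cross₂) ^ 2) * m = 2 * own₂ * base₁ + (cross₁ + cross₂) * base₂`,
and the right-hand side is nonnegative as soon as both products have nonnegative demand at cost.
Hence the Hessian determinant is nonnegative, the utility is concave on the whole plane, and its
stationary point is a global maximum.
-/

theorem quadratic_stationary_of_cramer {K : Type*} [Field K] [NeZero (2 : K)]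
    {a b c d e x y : K} (hc : c ≠ 0) (hdisc : 4 * a * c - b ^ 2 ≠ 0)
    (hx : x = -(2 * c * d - b * e) / (4 * a * c - b ^ 2)) (hy : y = -(b * x + e) / (2 * c)) :
    2 * a * x + b * y + d = 0 ∧ b * x + 2 * c * y + e = 0 := by
  have h2c : 2 * c ≠ 0 := mul_ne_zero two_ne_zero hc
  rw [eq_div_iff hdisc] at hx
  rw [eq_div_iff h2c] at hy
  have hy' : b * x + 2 * c * y + e = 0 := by linear_combination hy
  refine ⟨(mul_eq_zero_iff_left h2c).mp ?_, hy'⟩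
  linear_combination hx + b * hy'

theorem quadratic_le_of_stationary {K : Type*} [CommRing K] [LinearOrder K]
    [IsStrictOrderedRing K] {a b c d e x y : K} (hc : c < 0) (hdisc : 0 ≤ 4 * a * c - b ^ 2)
    (hx : 2 * a * x + b * y + d = 0) (hy : b * x + 2 * c * y + e = 0) (x' y' : K) :
    a * x' ^ 2 + b * x' * y' + c * y' ^ 2 + d * x' + e * y'
      ≤ a * x ^ 2 + b * x * y + c * y ^ 2 + d * x + e * y := by
  have hsq : 0 ≤ (2 * c * (y' - y) + b * (x' - x)) ^ 2
      + (4 * a * c - b ^ 2) * (x' - x) ^ 2 := by positivity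
  refine (mul_le_mul_left_of_neg (mul_neg_of_pos_of_neg four_pos hc)).mp ?_
  linear_combination hsq - 4 * c * (x' - x) * hx - 4 * c * (y' - y) * hy

/-- An affine demand system for the two products of a firm, as a function of their margins (price
minus unit cost) `m` and `n`; `baseᵢ` is the demand when both products are sold at cost. -/
structure LinearDemand (K : Type*) where
  base₁ : K
  own₁ : K
  cross₁ : K
  base₂ : K
  own₂ : K
  cross₂ : K

namespace LinearDemand

section Defs

variable {K : Type*} [CommRing K] (S : LinearDemand K) (m n : K)

/-- The demand for the first product at margins `m` and `n`. -/
def quantity₁ : K := S.base₁ - S.own₁ * m + S.cross₁ * n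

/-- The demand for the second product at margins `m` and `n`. -/
def quantity₂ : K := S.base₂ + S.cross₂ * m - S.own₂ * n

/-- The gross profit of a firm selling both products at margins `m` and `n`. -/
def profit : K := m * S.quantity₁ m n + n * S.quantity₂ m n

/-- The first-order conditions for the profit: its partial derivatives
`quantity₁ - own₁ * m + cross₂ * n` and `quantity₂ + cross₁ * m - own₂ * n` vanish. -/
structure IsStationary : Prop where
  quantity₁_eq : S.quantity₁ m n = S.own₁ * m - S.cross₂ * n
  quantity₂_eq : S.quantity₂ m n = S.own₂ * n - S.cross₁ * m

end Defs

variable {K : Type*} [CommRing K] [LinearOrder K] [IsStrictOrderedRing K]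
  {S : LinearDemand K} {m n : K}

theorem IsStationary.margin_pos (h : S.IsStationary m n) (hown : 0 ≤ S.own₂)
    (hcross : 0 < S.cross₂) (hdet : S.cross₁ * S.cross₂ < S.own₁ * S.own₂)
    (hq₁ : 0 ≤ S.quantity₁ m n) (hq₂ : 0 < S.quantity₂ m n) : 0 < m := by
  have hmul : (S.own₁ * S.own₂ - S.cross₁ * S.cross₂) * m
      = S.own₂ * S.quantity₁ m n + S.cross₂ * S.quantity₂ m n := by
    rw [h.quantity₁_eq, h.quantity₂_eq]
    ring
  refine pos_of_mul_pos_right ?_ (sub_pos.mpr hdet).le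
  rw [hmul]
  positivity

theorem IsStationary.discrim_nonneg (h : S.IsStationary m n) (hm : 0 < m)
    (hown : 0 ≤ S.own₂) (hcross : 0 ≤ S.cross₁ + S.cross₂)
    (hb₁ : 0 ≤ S.base₁) (hb₂ : 0 ≤ S.base₂) :
    0 ≤ 4 * S.own₁ * S.own₂ - (S.cross₁ + S.cross₂) ^ 2 := by
  have hmul : (4 * S.own₁ * S.own₂ - (S.cross₁ + S.cross₂) ^ 2) * m
      = 2 * S.own₂ * S.base₁ + (S.cross₁ + S.cross₂) * S.base₂ := by
    have h₁ := h.quantity₁_eq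
    have h₂ := h.quantity₂_eq
    simp only [quantity₁, quantity₂] at h₁ h₂
    linear_combination -2 * S.own₂ * h₁ - (S.cross₁ + S.cross₂) * h₂
  refine nonneg_of_mul_nonneg_left ?_ hm
  rw [hmul]
  positivity

theorem IsStationary.profit_le (h : S.IsStationary m n) (hown : 0 < S.own₂)
    (hdisc : 0 ≤ 4 * S.own₁ * S.own₂ - (S.cross₁ + S.cross₂) ^ 2) (m' n' : K) :
    S.profit m' n' ≤ S.profit m n := by
  have h₁ := h.quantity₁_eq
  have h₂ := h.quantity₂_eq
  simp only [quantity₁, quantity₂] at h₁ h₂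
  have hmax := quadratic_le_of_stationary (a := -S.own₁) (b := S.cross₁ + S.cross₂)
    (c := -S.own₂) (d := S.base₁) (e := S.base₂) (x := m) (y := n) (neg_lt_zero.mpr hown)
    (by linear_combination hdisc) (by linear_combination h₁) (by linear_combination h₂) m' n'
  simp only [profit, quantity₁, quantity₂]
  linear_combination hmax

theorem IsStationary.profit_le_of_quantity (h : S.IsStationary m n) (hown : 0 < S.own₂)
    (hcross₁ : 0 ≤ S.cross₁) (hcross₂ : 0 < S.cross₂)
    (hdet : S.cross₁ * S.cross₂ < S.own₁ * S.own₂) (hb₁ : 0 ≤ S.base₁) (hb₂ : 0 ≤ S.base₂)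
    (hq₁ : 0 ≤ S.quantity₁ m n) (hq₂ : 0 < S.quantity₂ m n) (m' n' : K) :
    S.profit m' n' ≤ S.profit m n :=
  have hm : 0 < m := h.margin_pos hown.le hcross₂ hdet hq₁ hq₂
  h.profit_le hown (h.discrim_nonneg hm hown.le (add_nonneg hcross₁ hcross₂.le) hb₁ hb₂) m' n'

end LinearDemand

/-- The demand system faced by the coalition: product 1 is its retail good, with margin
`p - (Ci + CS)`, and product 2 is what it sells wholesale to the competitor `j`, with margin
`q - CS`. Here `j` is assumed to answer `(p, q)` by its profit-maximising retail price
`(dj + ε * ai * p + aj * (Cj + q)) / (2 * aj)`. -/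
noncomputable def coalitionDemand (di dj ai aj Ci Cj CS ε : ℝ) : LinearDemand ℝ where
  base₁ := (2 * di + ε * dj + ε * aj * (Cj + CS) - (2 - ε ^ 2) * ai * (Ci + CS)) / 2
  own₁ := (2 - ε ^ 2) * ai / 2
  cross₁ := ε * aj / 2
  base₂ := (dj - aj * (Cj + CS) + ε * ai * (Ci + CS)) / 2
  own₂ := aj / 2
  cross₂ := ε * ai / 2

namespace coalitionDemand

variable {di dj ai aj Ci Cj CS ε p q : ℝ}

theorem quantity₁_eq :
    (coalitionDemand di dj ai aj Ci Cj CS ε).quantity₁ (p - (Ci + CS)) (q - CS)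
      = (2 * di + ε * dj + ε * aj * (Cj + q) - (2 - ε ^ 2) * ai * p) / 2 := by
  simp only [coalitionDemand, LinearDemand.quantity₁]
  ring

theorem quantity₂_eq :
    (coalitionDemand di dj ai aj Ci Cj CS ε).quantity₂ (p - (Ci + CS)) (q - CS)
      = (dj + ε * ai * p - aj * Cj - aj * q) / 2 := by
  simp only [coalitionDemand, LinearDemand.quantity₂]
  ring

theorem base₁_nonneg (hai : 0 ≤ ai) (haj : 0 ≤ aj) (hCi : 0 ≤ Ci) (hCj : 0 ≤ Cj) (hCS : 0 ≤ CS)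
    (hε : 0 ≤ ε) (hdi : ai * (CS + Ci) ≤ di) (hdj : aj * (CS + Cj) ≤ dj) :
    0 ≤ (coalitionDemand di dj ai aj Ci Cj CS ε).base₁ := by
  have hdj₀ : 0 ≤ dj := le_trans (by positivity) hdj
  have hterms : 0 ≤ ε * dj + ε * aj * (Cj + CS) + ε ^ 2 * ai * (Ci + CS) := by positivity
  simp only [coalitionDemand]
  linarith

theorem base₂_nonneg (hai : 0 ≤ ai) (hCi : 0 ≤ Ci) (hCS : 0 ≤ CS) (hε : 0 ≤ ε)
    (hdj : aj * (CS + Cj) ≤ dj) : 0 ≤ (coalitionDemand di dj ai aj Ci Cj CS ε).base₂ := by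
  have hterm : 0 ≤ ε * ai * (Ci + CS) := by positivity
  simp only [coalitionDemand]
  linarith

theorem cross_mul_cross_lt_own_mul_own (hai : 0 < ai) (haj : 0 < aj) (hε0 : 0 ≤ ε)
    (hε1 : ε < 1) :
    (coalitionDemand di dj ai aj Ci Cj CS ε).cross₁
        * (coalitionDemand di dj ai aj Ci Cj CS ε).cross₂
      < (coalitionDemand di dj ai aj Ci Cj CS ε).own₁
        * (coalitionDemand di dj ai aj Ci Cj CS ε).own₂ := by
  have hgap : 0 < ai * aj * (1 - ε ^ 2) :=
    mul_pos (mul_pos hai haj) (sub_pos.mpr (pow_lt_one₀ hε0 hε1 two_ne_zero))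
  simp only [coalitionDemand]
  linarith

theorem quantity₁_nonneg (hai : 0 < ai) (hε0 : 0 ≤ ε) (hε1 : ε < 1)
    (hp : p ≤ (2 * di + ε * dj + ε * aj * (Cj + q)) / ((2 - ε ^ 2) * ai)) :
    0 ≤ (coalitionDemand di dj ai aj Ci Cj CS ε).quantity₁ (p - (Ci + CS)) (q - CS) := by
  have hε2 : ε ^ 2 < 1 := pow_lt_one₀ hε0 hε1 two_ne_zero
  rw [le_div_iff₀ (mul_pos (by linarith) hai)] at hp
  rw [quantity₁_eq]
  linarith

/-- For `s = √(aj * Oj)` the conclusion says that the gross profit `quantity₂ ^ 2 / aj` of the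
competitor covers its operating cost `Oj`. -/
theorem le_quantity₂ (hai : 0 < ai) (haj : 0 < aj) (hε : 0 < ε) {s : ℝ}
    (hθ : p < di / ai + s / (ε * ai) → q ≤ (dj + ε * ai * p - aj * Cj - 2 * s) / aj)
    (hφ : q ≤ (dj + 2 * ε * di - ε * ai * p - aj * Cj) / aj) :
    s ≤ (coalitionDemand di dj ai aj Ci Cj CS ε).quantity₂ (p - (Ci + CS)) (q - CS) := by
  rw [quantity₂_eq]
  rcases lt_or_ge p (di / ai + s / (ε * ai)) with hlt | hge
  · have hq := hθ hlt
    rw [le_div_iff₀ haj] at hq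
    linarith
  · have hp : ε * di + s ≤ ε * ai * p :=
      calc ε * di + s = ε * ai * (di / ai + s / (ε * ai)) := by field_simp
        _ ≤ ε * ai * p := by gcongr
    rw [le_div_iff₀ haj] at hφ
    linarith

end coalitionDemand

theorem stmt18_general (di dj ai aj Ci Cj CS Oi Oj OS ε : ℝ)
    (hai : 0 < ai) (haj : 0 < aj) (hCi : 0 ≤ Ci) (hCj : 0 ≤ Cj) (hCS : 0 ≤ CS) (hOj : 0 < Oj)
    (hε0 : 0 < ε) (hε1 : ε < 1)
    (hdi : ai * (CS + Ci) ≤ di) (hdj : aj * (CS + Cj) ≤ dj)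
    (w1 w2 w3 w4 w5 w6 : ℝ)
    (hw1 : w1 = -(ai * (2 - ε ^ 2)) / 2)
    (hw2 : w2 = ε * (ai + aj) / 2)
    (hw3 : w3 = -aj / 2)
    (hw4 : w4 = (2 * di + ε * dj + ε * aj * Cj - ε * ai * CS
        + ai * (2 - ε ^ 2) * (Ci + CS)) / 2)
    (hw5 : w5 = (dj - aj * Cj + aj * CS - ε * aj * (Ci + CS)) / 2)
    (hw6 : w6 = -(di + ε * (dj + aj * Cj) / 2) * (Ci + CS)
        - (dj - aj * Cj) / 2 * CS - Oi - OS)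
    (hdisc : 4 * w1 * w3 - w2 ^ 2 ≠ 0)
    (psw : ℝ) (hpsw : psw = di / ai + Real.sqrt (aj * Oj) / (ε * ai))
    (θ φ ψ : ℝ → ℝ)
    (hθ : ∀ p, θ p =
      if p < psw then (dj + ε * ai * p - aj * Cj - 2 * Real.sqrt (aj * Oj)) / aj
      else (dj + ε * di - aj * Cj) / aj - Oj / (ε * ai * p - ε * di))
    (hφ : ∀ p, φ p = (dj + 2 * ε * di - ε * ai * p - aj * Cj) / aj)
    (hψ : ∀ q, ψ q = (2 * di + ε * dj + ε * aj * (Cj + q)) / ((2 - ε ^ 2) * ai))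
    (U : ℝ → ℝ → ℝ)
    (hU : ∀ p q, U p q = w1 * p ^ 2 + w2 * p * q + w3 * q ^ 2 + w4 * p + w5 * q + w6)
    (pco qco : ℝ)
    (hpco : pco = -(2 * w3 * w4 - w2 * w5) / (4 * w1 * w3 - w2 ^ 2))
    (hqco : qco = -(w2 * pco + w5) / (2 * w3))
    (hp : pco ≤ ψ qco) (hq : qco ≤ min (θ pco) (φ pco)) (p q : ℝ) :
    U p q ≤ U pco qco := by
  let S := coalitionDemand di dj ai aj Ci Cj CS ε
  have hU_profit (p q : ℝ) : U p q = S.profit (p - (Ci + CS)) (q - CS) - (Oi + OS) := by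
    simp only [hU, hw1, hw2, hw3, hw4, hw5, hw6, S, LinearDemand.profit,
      coalitionDemand.quantity₁_eq, coalitionDemand.quantity₂_eq]
    ring
  have hstat : S.IsStationary (pco - (Ci + CS)) (qco - CS) := by
    have hw3_ne : w3 ≠ 0 := hw3 ▸ (div_neg_of_neg_of_pos (neg_lt_zero.mpr haj) two_pos).ne
    obtain ⟨h₁, h₂⟩ := quadratic_stationary_of_cramer hw3_ne hdisc hpco hqco
    rw [hw1, hw2, hw4] at h₁
    rw [hw2, hw3, hw5] at h₂
    constructor
    · rw [coalitionDemand.quantity₁_eq]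
      simp only [S, coalitionDemand]
      linear_combination h₁
    · rw [coalitionDemand.quantity₂_eq]
      simp only [S, coalitionDemand]
      linear_combination h₂
  obtain ⟨hqθ, hqφ⟩ := le_min_iff.mp hq
  have hq₁ : 0 ≤ S.quantity₁ (pco - (Ci + CS)) (qco - CS) :=
    coalitionDemand.quantity₁_nonneg hai hε0.le hε1 (hψ qco ▸ hp)
  have hq₂ : 0 < S.quantity₂ (pco - (Ci + CS)) (qco - CS) :=
    (Real.sqrt_pos.mpr (mul_pos haj hOj)).trans_le <| coalitionDemand.le_quantity₂ hai haj hε0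
      (fun hlt => by rwa [hθ, if_pos (hpsw ▸ hlt)] at hqθ) (hφ pco ▸ hqφ)
  rw [hU_profit, hU_profit]
  refine sub_le_sub_right (hstat.profit_le_of_quantity (half_pos haj)
    (half_pos (mul_pos hε0 haj)).le (half_pos (mul_pos hε0 hai)) ?_ ?_ ?_ hq₁ hq₂ _ _) _
  · exact coalitionDemand.cross_mul_cross_lt_own_mul_own hai haj hε0.le hε1
  · exact coalitionDemand.base₁_nonneg hai.le haj.le hCi hCj hCS hε0.le hdi hdj
  · exact coalitionDemand.base₂_nonneg hai.le hCi hCS hε0.le hdj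

/-- Theorem 1(i): under A.1, A.2 and nondegeneracy of the quadratic,
if the stationary point `(p*_co, q*_co)` lies in the interior of `F_co⁺`, then the
maximum of the coalition's co-existence utility `U` over `F_co⁺` is attained at
`(p*_co, q*_co)`. -/
theorem stmt18 (di dj ai aj Ci Cj CS Oi Oj OS ε : ℝ)
    (hdi : 0 < di) (hdj : 0 < dj) (hai : 0 < ai) (haj : 0 < aj)
    (hCi : 0 < Ci) (hCj : 0 < Cj) (hCS : 0 < CS)
    (hOi : 0 < Oi) (hOj : 0 < Oj) (hOS : 0 < OS)
    (hε0 : 0 < ε) (hε1 : ε < 1)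
    (hA1i : di ≥ ai * (CS + Ci) + 2 * Real.sqrt (ai * (OS + Oi)))
    (hA1j : dj ≥ aj * (CS + Cj)
        + 2 * max (Real.sqrt (2 * aj * (OS + Oi))) (Real.sqrt (aj * Oj)))
    (hA2 : ε ≤ 2 * Real.sqrt (aj * Oj) / (aj * Ci))
    (w1 w2 w3 w4 w5 w6 : ℝ)
    (hw1 : w1 = -(ai * (2 - ε ^ 2)) / 2)
    (hw2 : w2 = ε * (ai + aj) / 2)
    (hw3 : w3 = -aj / 2)
    (hw4 : w4 = (2 * di + ε * dj + ε * aj * Cj - ε * ai * CS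
        + ai * (2 - ε ^ 2) * (Ci + CS)) / 2)
    (hw5 : w5 = (dj - aj * Cj + aj * CS - ε * aj * (Ci + CS)) / 2)
    (hw6 : w6 = -(di + ε * (dj + aj * Cj) / 2) * (Ci + CS)
        - (dj - aj * Cj) / 2 * CS - Oi - OS)
    (hdisc : 4 * w1 * w3 - w2 ^ 2 ≠ 0)
    (pmx psw : ℝ)
    (hpmx : pmx = (di + ε * dj) / ai)
    (hpsw : psw = di / ai + Real.sqrt (aj * Oj) / (ε * ai))
    (θ φ ψ : ℝ → ℝ)
    (hθ : ∀ p, θ p =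
      if p < psw then (dj + ε * ai * p - aj * Cj - 2 * Real.sqrt (aj * Oj)) / aj
      else (dj + ε * di - aj * Cj) / aj - Oj / (ε * ai * p - ε * di))
    (hφ : ∀ p, φ p = (dj + 2 * ε * di - ε * ai * p - aj * Cj) / aj)
    (hψ : ∀ q, ψ q = (2 * di + ε * dj + ε * aj * (Cj + q)) / ((2 - ε ^ 2) * ai))
    (U : ℝ → ℝ → ℝ)
    (hU : ∀ p q, U p q = w1 * p ^ 2 + w2 * p * q + w3 * q ^ 2 + w4 * p + w5 * q + w6)
    (Fco : Set (ℝ × ℝ))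
    (hFco : Fco = {x : ℝ × ℝ | 0 ≤ x.1 ∧ 0 ≤ x.2 ∧
      x.1 ≤ min pmx (ψ x.2) ∧ x.2 ≤ min (θ x.1) (φ x.1)})
    (pco qco : ℝ)
    (hpco : pco = -(2 * w3 * w4 - w2 * w5) / (4 * w1 * w3 - w2 ^ 2))
    (hqco : qco = -(w2 * pco + w5) / (2 * w3))
    (hint : (pco, qco) ∈ interior Fco) :
    ∀ x ∈ Fco, U x.1 x.2 ≤ U pco qco := by
  obtain ⟨-, -, hp, hq⟩ := hFco ▸ interior_subset hint
  exact fun x _ => stmt18_general di dj ai aj Ci Cj CS Oi Oj OS ε hai haj hCi.le hCj.le hCS.le hOj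
    hε0 hε1 (le_of_add_le_of_nonneg_left hA1i (by positivity))
    (le_of_add_le_of_nonneg_left hA1j (by positivity)) w1 w2 w3 w4 w5 w6 hw1 hw2 hw3 hw4 hw5 hw6
    hdisc psw hpsw θ φ ψ hθ hφ hψ U hU pco qco hpco hqco (hp.trans (min_le_right _ _)) hq x.1 x.2
end

section
/- Theorem 1(ii). Assume all parameters positive, 0 < ε < 1, assumption A.1 (d̄ᵢ ≥ αᵢ·(C_S + Cᵢ) + 2·√(αᵢ·(O_S + Oᵢ)) and d̄ⱼ ≥ αⱼ·(C_S + Cⱼ) + 2·max{√(2·αⱼ·(O_S + Oᵢ)), √(αⱼ·Oⱼ)}), assumption A.2 (ε ≤ 2·√(αⱼ·Oⱼ)/(αⱼ·Cᵢ)), and 4·w₁·w₃ − w₂² ≠ 0. If the stationary point (p*_co, q*_co) does NOT lie in the topological interior of F_co⁺, then there exists a point (p₀,q₀) ∈ F_co⁺ ∩ (𝕃₁ ∪ 𝕃₂ ∪ 𝕃₃ ∪ 𝕃₄) such that U(p,q) ≤ U(p₀,q₀) for all (p,q) ∈ F_co⁺, where 𝕃₁ := {(p,q) : q = φ(p)},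 𝕃₂ := {(p,q) : p = ψ(q)}, 𝕃₃ := {(p,q) : q = (d̄ⱼ + ε·αᵢ·p − αⱼ·Cⱼ − 2·√(αⱼ·Oⱼ))/αⱼ}, and 𝕃₄ := {(p,q) : p = p_mx}; i.e., the maximum of U over F_co⁺ is attained on one of these four boundary lines (not on the lines {p = 0} or {q = 0}). -/
/-!
Only the constraint `q ≤ θ p` is not affine, and it may be replaced by the affine one bounding `𝕃₃`:
from the switching price on, both are implied by `q ≤ φ p`. So `F_co⁺` is a compact piece of the
quadrant `p, q ≥ 0`, and a maximiser of `U` off the four lines is a local maximiser on the whole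
quadrant. At such a point neither coordinate vanishes: `∂U/∂p > 0` wherever `p = 0`, and if `q = 0`
and `∂U/∂p = 0`, then `p < ψ 0` and the positivity of the affine cap at `p` force `∂U/∂q > 0`.
Hence the maximiser is the stationary point, and it is interior.
-/

open Set Filter Topology

section QuadrantMaxima

theorem deriv_nonpos_of_isLocalMaxOn_Ici {f : ℝ → ℝ} {f' a x : ℝ} (hx : a ≤ x)
    (hmax : IsLocalMaxOn f (Ici a) x) (hf : HasDerivAt f f' x) : f' ≤ 0 := by
  have hcone : x + 1 - x ∈ posTangentConeAt (Ici a) x :=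
    sub_mem_posTangentConeAt_of_segment_subset <|
      (convex_Ici a).segment_subset hx (hx.trans (le_add_of_nonneg_right zero_le_one))
  simpa using hmax.hasFDerivWithinAt_nonpos hf.hasFDerivAt.hasFDerivWithinAt hcone

theorem deriv_eq_zero_of_isLocalMaxOn_Ici {f : ℝ → ℝ} {f' a x : ℝ} (hx : a < x)
    (hmax : IsLocalMaxOn f (Ici a) x) (hf : HasDerivAt f f' x) : f' = 0 :=
  (hmax.isLocalMax (Ici_mem_nhds hx)).hasDerivAt_eq_zero hf

variable {f f₁ f₂ : ℝ × ℝ → ℝ} {x : ℝ × ℝ}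

theorem isLocalMaxOn_Ici_fst (hx : 0 ≤ x) (hmax : IsLocalMaxOn f (Ici 0) x) :
    IsLocalMaxOn (fun s => f (s, x.2)) (Ici 0) x.1 :=
  hmax.comp_continuousOn (g := fun s => (s, x.2)) (fun _ hs => ⟨hs, hx.2⟩) (by fun_prop) hx.1

theorem isLocalMaxOn_Ici_snd (hx : 0 ≤ x) (hmax : IsLocalMaxOn f (Ici 0) x) :
    IsLocalMaxOn (fun s => f (x.1, s)) (Ici 0) x.2 :=
  hmax.comp_continuousOn (g := fun s => (x.1, s)) (fun _ hs => ⟨hx.1, hs⟩) (by fun_prop) hx.2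

theorem partials_eq_zero_of_isLocalMaxOn_Ici (hx : 0 ≤ x) (hmax : IsLocalMaxOn f (Ici 0) x)
    (hf₁ : HasDerivAt (fun s => f (s, x.2)) (f₁ x) x.1)
    (hf₂ : HasDerivAt (fun s => f (x.1, s)) (f₂ x) x.2)
    (hfst : x.1 = 0 → 0 < f₁ x) (hsnd : x.2 = 0 → f₁ x = 0 → 0 < f₂ x) :
    (0 < x.1 ∧ 0 < x.2) ∧ f₁ x = 0 ∧ f₂ x = 0 := by
  have hmax₁ := isLocalMaxOn_Ici_fst hx hmax
  have hmax₂ := isLocalMaxOn_Ici_snd hx hmax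
  have hpos₁ : 0 < x.1 := hx.1.lt_of_ne' fun h =>
    (hfst h).not_ge (deriv_nonpos_of_isLocalMaxOn_Ici hx.1 hmax₁ hf₁)
  have hzero₁ : f₁ x = 0 := deriv_eq_zero_of_isLocalMaxOn_Ici hpos₁ hmax₁ hf₁
  have hpos₂ : 0 < x.2 := hx.2.lt_of_ne' fun h =>
    (hsnd h hzero₁).not_ge (deriv_nonpos_of_isLocalMaxOn_Ici hx.2 hmax₂ hf₂)
  exact ⟨⟨hpos₁, hpos₂⟩, hzero₁, deriv_eq_zero_of_isLocalMaxOn_Ici hpos₂ hmax₂ hf₂⟩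

end QuadrantMaxima

/-- The part of the quadrant `p, q ≥ 0` cut off by a cap `a q` on `p` and a cap `b p` on `q`.
The set `F_co⁺` is of this form, with the minimum of two of its bounds for each cap. -/
def cappedQuadrant (a b : ℝ → ℝ) : Set (ℝ × ℝ) :=
  {x | 0 ≤ x.1 ∧ 0 ≤ x.2 ∧ x.1 ≤ a x.2 ∧ x.2 ≤ b x.1}

namespace cappedQuadrant

variable {a b : ℝ → ℝ} {x : ℝ × ℝ}

theorem isCompact (ha : Continuous a) (hb : Continuous b) {A B : ℝ}
    (hA : ∀ q, 0 ≤ q → a q ≤ A) (hB : ∀ p, 0 ≤ p → b p ≤ B) :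
    IsCompact (cappedQuadrant a b) := by
  have hclosed : IsClosed (cappedQuadrant a b) :=
    (isClosed_le continuous_const continuous_fst).inter <|
      (isClosed_le continuous_const continuous_snd).inter <|
        (isClosed_le continuous_fst (by fun_prop)).inter (isClosed_le continuous_snd (by fun_prop))
  exact (isCompact_Icc (a := (0, 0)) (b := (A, B))).of_isClosed_subset hclosed
    fun x ⟨hp, hq, hpa, hqb⟩ => ⟨⟨hp, hq⟩, hpa.trans (hA _ hq), hqb.trans (hB _ hp)⟩

theorem mem_nhdsWithin (ha : Continuous a) (hb : Continuous b) (hxa : x.1 < a x.2)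
    (hxb : x.2 < b x.1) : cappedQuadrant a b ∈ 𝓝[Ici 0] x := by
  have ha_near : ∀ᶠ y : ℝ × ℝ in 𝓝 x, y.1 < a y.2 :=
    (isOpen_lt continuous_fst (by fun_prop)).mem_nhds hxa
  have hb_near : ∀ᶠ y : ℝ × ℝ in 𝓝 x, y.2 < b y.1 :=
    (isOpen_lt continuous_snd (by fun_prop)).mem_nhds hxb
  filter_upwards [self_mem_nhdsWithin, mem_nhdsWithin_of_mem_nhds ha_near,
    mem_nhdsWithin_of_mem_nhds hb_near] with y hy hya hyb
  exact ⟨hy.1, hy.2, hya.le, hyb.le⟩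

theorem mem_interior (ha : Continuous a) (hb : Continuous b) (hxa : x.1 < a x.2)
    (hxb : x.2 < b x.1) (hx : 0 < x.1 ∧ 0 < x.2) : x ∈ interior (cappedQuadrant a b) := by
  have hquadrant : Ici (0 : ℝ × ℝ) ∈ 𝓝 x := by
    rw [Ici_prod_eq]
    exact prod_mem_nhds (Ici_mem_nhds hx.1) (Ici_mem_nhds hx.2)
  exact mem_interior_iff_mem_nhds.2 <|
    nhdsWithin_eq_nhds.2 hquadrant ▸ mem_nhdsWithin ha hb hxa hxb

theorem exists_isMaxOn_eq_cap {f f₁ f₂ : ℝ × ℝ → ℝ} (ha : Continuous a) (hb : Continuous b)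
    (hcompact : IsCompact (cappedQuadrant a b)) (hne : (cappedQuadrant a b).Nonempty)
    (hf : Continuous f)
    (hf₁ : ∀ x, HasDerivAt (fun s => f (s, x.2)) (f₁ x) x.1)
    (hf₂ : ∀ x, HasDerivAt (fun s => f (x.1, s)) (f₂ x) x.2)
    (hfst : ∀ q, 0 ≤ q → 0 < f₁ (0, q))
    (hsnd : ∀ p, p < a 0 → 0 < b p → f₁ (p, 0) = 0 → 0 < f₂ (p, 0))
    (hcrit : ∀ x, f₁ x = 0 → f₂ x = 0 → x ∉ interior (cappedQuadrant a b)) :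
    ∃ x ∈ cappedQuadrant a b, (x.1 = a x.2 ∨ x.2 = b x.1) ∧ IsMaxOn f (cappedQuadrant a b) x := by
  obtain ⟨x, hx, hmax⟩ := hcompact.exists_isMaxOn hne hf.continuousOn
  refine ⟨x, hx, ?_, hmax⟩
  by_contra! hcap
  obtain ⟨hp, hq, hpa, hqb⟩ := hx
  have hxa : x.1 < a x.2 := hpa.lt_of_ne hcap.1
  have hxb : x.2 < b x.1 := hqb.lt_of_ne hcap.2
  have hlocal : IsLocalMaxOn f (Ici 0) x :=
    mem_of_superset (mem_nhdsWithin ha hb hxa hxb) hmax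
  obtain ⟨hpos, hzero₁, hzero₂⟩ := partials_eq_zero_of_isLocalMaxOn_Ici ⟨hp, hq⟩ hlocal
    (hf₁ x) (hf₂ x) (fun h => by simpa [← h] using hfst x.2 hq)
    (fun h h₁ => by simpa [← h] using hsnd x.1 (h ▸ hxa) (h ▸ hxb) (by simpa [← h] using h₁))
  exact hcrit x hzero₁ hzero₂ (mem_interior ha hb hxa hxb hpos)

end cappedQuadrant

section Quadratic

variable {w₁ w₂ w₃ w₄ w₅ : ℝ}

theorem hasDerivAt_quadratic_fst (w₁ w₂ w₃ w₄ w₅ w₆ p q : ℝ) :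
    HasDerivAt (fun s => w₁ * s ^ 2 + w₂ * s * q + w₃ * q ^ 2 + w₄ * s + w₅ * q + w₆)
      (2 * w₁ * p + w₂ * q + w₄) p := by
  have h := (((((hasDerivAt_pow 2 p).const_mul w₁).add
    (((hasDerivAt_id p).const_mul w₂).mul_const q)).add_const (w₃ * q ^ 2)).add
    ((hasDerivAt_id p).const_mul w₄)).add_const (w₅ * q) |>.add_const w₆
  exact h.congr_deriv (by norm_num; ring)

theorem hasDerivAt_quadratic_snd (w₁ w₂ w₃ w₄ w₅ w₆ p q : ℝ) :
    HasDerivAt (fun s => w₁ * p ^ 2 + w₂ * p * s + w₃ * s ^ 2 + w₄ * p + w₅ * s + w₆)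
      (w₂ * p + 2 * w₃ * q + w₅) q := by
  convert hasDerivAt_quadratic_fst w₃ w₂ w₁ w₅ w₄ w₆ q p using 1
  · ext s
    ring
  · ring

theorem eq_of_quadratic_gradient_eq_zero {p q : ℝ} (hdisc : 4 * w₁ * w₃ - w₂ ^ 2 ≠ 0)
    (hw₃ : w₃ ≠ 0) (hp : 2 * w₁ * p + w₂ * q + w₄ = 0) (hq : w₂ * p + 2 * w₃ * q + w₅ = 0) :
    p = -(2 * w₃ * w₄ - w₂ * w₅) / (4 * w₁ * w₃ - w₂ ^ 2) ∧ q = -(w₂ * p + w₅) / (2 * w₃) := by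
  rw [eq_div_iff hdisc, eq_div_iff (mul_ne_zero two_ne_zero hw₃)]
  exact ⟨by linear_combination 2 * w₃ * hp - w₂ * hq, by linear_combination hq⟩

theorem cappedQuadrant.exists_isMaxOn_quadratic_eq_cap {a b : ℝ → ℝ} (ha : Continuous a)
    (hb : Continuous b) (hcompact : IsCompact (cappedQuadrant a b))
    (hne : (cappedQuadrant a b).Nonempty) (w₆ : ℝ) (hdisc : 4 * w₁ * w₃ - w₂ ^ 2 ≠ 0)
    (hw₂ : 0 ≤ w₂) (hw₃ : w₃ ≠ 0) (hw₄ : 0 < w₄)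
    (hsnd : ∀ p, p < a 0 → 0 < b p → 2 * w₁ * p + w₄ = 0 → 0 < w₂ * p + w₅)
    {p₀ q₀ : ℝ} (hp₀ : p₀ = -(2 * w₃ * w₄ - w₂ * w₅) / (4 * w₁ * w₃ - w₂ ^ 2))
    (hq₀ : q₀ = -(w₂ * p₀ + w₅) / (2 * w₃)) (hnint : (p₀, q₀) ∉ interior (cappedQuadrant a b)) :
    ∃ x ∈ cappedQuadrant a b, (x.1 = a x.2 ∨ x.2 = b x.1) ∧
      IsMaxOn (fun x => w₁ * x.1 ^ 2 + w₂ * x.1 * x.2 + w₃ * x.2 ^ 2 + w₄ * x.1 + w₅ * x.2 + w₆)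
        (cappedQuadrant a b) x := by
  refine exists_isMaxOn_eq_cap (f₁ := fun x => 2 * w₁ * x.1 + w₂ * x.2 + w₄)
    (f₂ := fun x => w₂ * x.1 + 2 * w₃ * x.2 + w₅) ha hb hcompact hne (by fun_prop)
    (fun x => hasDerivAt_quadratic_fst w₁ w₂ w₃ w₄ w₅ w₆ x.1 x.2)
    (fun x => hasDerivAt_quadratic_snd w₁ w₂ w₃ w₄ w₅ w₆ x.1 x.2)
    (fun q hq => ?_) (fun p hpa hpb hp => ?_) (fun x h₁ h₂ => ?_)
  · simp only [mul_zero, zero_add]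
    positivity
  · simpa using hsnd p hpa hpb (by simpa using hp)
  · obtain ⟨hp, hq⟩ := eq_of_quadratic_gradient_eq_zero hdisc hw₃ h₁ h₂
    rw [← hp₀] at hp
    rw [hp, ← hq₀] at hq
    rwa [← hp, ← hq] at hnint

end Quadratic

section Coalition

variable {di dj ai aj Ci Cj CS Oj ε : ℝ}

/- From `t = r` on, both minima are `(A - t) / c`. -/
theorem min_ite_sub_div_eq {A c k r t : ℝ} (hc : 0 < c) (hr : 0 < r) (hk : r ^ 2 = c * k) :
    min (if t < r then (A + t - 2 * r) / c else A / c - k / t) ((A - t) / c) =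
      min ((A + t - 2 * r) / c) ((A - t) / c) := by
  split_ifs with htr
  · rfl
  · rw [not_lt] at htr
    have ht : 0 < t := hr.trans_le htr
    have hkt : k / t ≤ t / c := by
      rw [div_le_div_iff₀ ht hc]
      nlinarith
    have hcurve : (A - t) / c ≤ A / c - k / t := by
      rw [sub_div]
      linarith
    have hline : (A - t) / c ≤ (A + t - 2 * r) / c := by
      gcongr ?_ / _
      linarith
    rw [min_eq_right hcurve, min_eq_right hline]

theorem min_responseCap_eq (hai : 0 < ai) (haj : 0 < aj) (hOj : 0 < Oj) (hε : 0 < ε) (p : ℝ) :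
    min (if p < di / ai + √(aj * Oj) / (ε * ai)
          then (dj + ε * ai * p - aj * Cj - 2 * √(aj * Oj)) / aj
          else (dj + ε * di - aj * Cj) / aj - Oj / (ε * ai * p - ε * di))
        ((dj + 2 * ε * di - ε * ai * p - aj * Cj) / aj) =
      min ((dj + ε * ai * p - aj * Cj - 2 * √(aj * Oj)) / aj)
        ((dj + 2 * ε * di - ε * ai * p - aj * Cj) / aj) := by
  have hswitch : p < di / ai + √(aj * Oj) / (ε * ai) ↔ ε * ai * p - ε * di < √(aj * Oj) := by
    have : di / ai + √(aj * Oj) / (ε * ai) = (ε * di + √(aj * Oj)) / (ε * ai) := by field_simp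
    rw [this, lt_div_iff₀ (by positivity), sub_lt_iff_lt_add', mul_comm p]
  simp only [hswitch]
  convert min_ite_sub_div_eq (A := dj + ε * di - aj * Cj) (t := ε * ai * p - ε * di) haj
    (Real.sqrt_pos.2 (mul_pos haj hOj)) (Real.sq_sqrt (mul_pos haj hOj).le) using 3 <;> ring

theorem price_linearCoeff_pos (hdi : 0 < di) (hdj : 0 < dj) (hai : 0 < ai) (haj : 0 < aj)
    (hCi : 0 < Ci) (hCj : 0 < Cj) (hCS : 0 < CS) (hε0 : 0 < ε) (hε1 : ε ≤ 1) :
    0 < (2 * di + ε * dj + ε * aj * Cj - ε * ai * CS + ai * (2 - ε ^ 2) * (Ci + CS)) / 2 := by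
  have hε : ε ≤ 2 - ε ^ 2 := by nlinarith
  have hcoeff : 0 ≤ ai * (2 - ε ^ 2) := mul_nonneg hai.le (hε0.le.trans hε)
  have hCS_le : CS ≤ Ci + CS := le_add_of_nonneg_left hCi.le
  have hcost : ε * ai * CS ≤ ai * (2 - ε ^ 2) * (Ci + CS) := by
    calc ε * ai * CS = ai * ε * CS := by ring
      _ ≤ ai * (2 - ε ^ 2) * (Ci + CS) := by gcongr
  have : 0 < 2 * di + ε * dj + ε * aj * Cj := by positivity
  linarith

/- Stationarity in `p` expresses `p` as the mean of `ψ 0` and the cost `Ci + CS` lowered by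
`ε * CS / (2 - ε ^ 2)`, so `p < ψ 0` means that `p` exceeds this lowered cost. -/
theorem quantity_partial_pos (hai : 0 < ai) (haj : 0 < aj) (hCS : 0 < CS)
    (hε0 : 0 < ε) (hε1 : ε ≤ 1) {p : ℝ}
    (hpψ : p < (2 * di + ε * dj + ε * aj * Cj) / ((2 - ε ^ 2) * ai))
    (hdemand : 0 < dj + ε * ai * p - aj * Cj)
    (hstat : 2 * (-(ai * (2 - ε ^ 2)) / 2) * p
      + (2 * di + ε * dj + ε * aj * Cj - ε * ai * CS + ai * (2 - ε ^ 2) * (Ci + CS)) / 2 = 0) :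
    0 < ε * (ai + aj) / 2 * p + (dj - aj * Cj + aj * CS - ε * aj * (Ci + CS)) / 2 := by
  have hε2 : 0 < 2 - ε ^ 2 := by nlinarith
  have hp : (2 - ε ^ 2) * (Ci + CS) - ε * CS < (2 - ε ^ 2) * p := by
    rw [lt_div_iff₀ (by positivity)] at hpψ
    refine lt_of_mul_lt_mul_left ?_ hai.le
    linarith
  have hε_sq : 0 ≤ 1 - ε ^ 2 := by nlinarith
  have hmargin : 0 < ε * p + CS - ε * (Ci + CS) := by
    refine pos_of_mul_pos_right ?_ hε2.le
    calc 0 ≤ 2 * (1 - ε ^ 2) * CS := by positivity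
      _ < (2 - ε ^ 2) * (ε * p + CS - ε * (Ci + CS)) := by nlinarith
  linarith [mul_pos haj hmargin]

theorem feasible_nonempty (hdi : 0 < di) (hdj : 0 < dj) (hai : 0 < ai) (haj : 0 < aj)
    (hCj : 0 < Cj) (hε0 : 0 < ε) (hε2 : ε ^ 2 ≤ 2) (hdemand : aj * Cj + 2 * √(aj * Oj) ≤ dj)
    {pmx psw : ℝ} (hpmx : pmx = (di + ε * dj) / ai)
    (hpsw : psw = di / ai + √(aj * Oj) / (ε * ai)) {θ φ ψ : ℝ → ℝ}
    (hθ : ∀ p, θ p = if p < psw then (dj + ε * ai * p - aj * Cj - 2 * √(aj * Oj)) / aj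
      else (dj + ε * di - aj * Cj) / aj - Oj / (ε * ai * p - ε * di))
    (hφ : ∀ p, φ p = (dj + 2 * ε * di - ε * ai * p - aj * Cj) / aj)
    (hψ : ∀ q, ψ q = (2 * di + ε * dj + ε * aj * (Cj + q)) / ((2 - ε ^ 2) * ai)) :
    {x : ℝ × ℝ | 0 ≤ x.1 ∧ 0 ≤ x.2 ∧
      x.1 ≤ min pmx (ψ x.2) ∧ x.2 ≤ min (θ x.1) (φ x.1)}.Nonempty := by
  have hpsw_pos : 0 < psw := hpsw ▸ by positivity
  refine ⟨(0, 0), le_rfl, le_rfl, le_min ?_ ?_, le_min ?_ ?_⟩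
  · simp only [hpmx]
    positivity
  · simp only [hψ]
    exact div_nonneg (by positivity) (mul_nonneg (sub_nonneg.2 hε2) hai.le)
  · simp only [hθ, hpsw_pos, if_true]
    exact div_nonneg (by linarith) haj.le
  · simp only [hφ]
    exact div_nonneg (by linarith [mul_pos hε0 hdi, Real.sqrt_nonneg (aj * Oj)]) haj.le

end Coalition

theorem stmt19_general (di dj ai aj Ci Cj CS Oj ε : ℝ)
    (hdi : 0 < di) (hdj : 0 < dj) (hai : 0 < ai) (haj : 0 < aj)
    (hCi : 0 < Ci) (hCj : 0 < Cj) (hCS : 0 < CS)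
    (hOj : 0 < Oj) (hε0 : 0 < ε) (hε1 : ε ≤ 1)
    (w1 w2 w3 w4 w5 w6 : ℝ)
    (hw1 : w1 = -(ai * (2 - ε ^ 2)) / 2)
    (hw2 : w2 = ε * (ai + aj) / 2)
    (hw3 : w3 = -aj / 2)
    (hw4 : w4 = (2 * di + ε * dj + ε * aj * Cj - ε * ai * CS
        + ai * (2 - ε ^ 2) * (Ci + CS)) / 2)
    (hw5 : w5 = (dj - aj * Cj + aj * CS - ε * aj * (Ci + CS)) / 2)
    (hdisc : 4 * w1 * w3 - w2 ^ 2 ≠ 0)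
    (pmx psw : ℝ)
    (hpsw : psw = di / ai + √(aj * Oj) / (ε * ai))
    (θ φ ψ : ℝ → ℝ)
    (hθ : ∀ p, θ p =
      if p < psw then (dj + ε * ai * p - aj * Cj - 2 * √(aj * Oj)) / aj
      else (dj + ε * di - aj * Cj) / aj - Oj / (ε * ai * p - ε * di))
    (hφ : ∀ p, φ p = (dj + 2 * ε * di - ε * ai * p - aj * Cj) / aj)
    (hψ : ∀ q, ψ q = (2 * di + ε * dj + ε * aj * (Cj + q)) / ((2 - ε ^ 2) * ai))
    (U : ℝ → ℝ → ℝ)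
    (hU : ∀ p q, U p q = w1 * p ^ 2 + w2 * p * q + w3 * q ^ 2 + w4 * p + w5 * q + w6)
    (Fco : Set (ℝ × ℝ))
    (hFco : Fco = {x : ℝ × ℝ | 0 ≤ x.1 ∧ 0 ≤ x.2 ∧
      x.1 ≤ min pmx (ψ x.2) ∧ x.2 ≤ min (θ x.1) (φ x.1)})
    (hne : Fco.Nonempty)
    (L1 L2 L3 L4 : Set (ℝ × ℝ))
    (hL1 : L1 = {x : ℝ × ℝ | x.2 = φ x.1})
    (hL2 : L2 = {x : ℝ × ℝ | x.1 = ψ x.2})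
    (hL3 : L3 = {x : ℝ × ℝ |
      x.2 = (dj + ε * ai * x.1 - aj * Cj - 2 * √(aj * Oj)) / aj})
    (hL4 : L4 = {x : ℝ × ℝ | x.1 = pmx})
    (pco qco : ℝ)
    (hpco : pco = -(2 * w3 * w4 - w2 * w5) / (4 * w1 * w3 - w2 ^ 2))
    (hqco : qco = -(w2 * pco + w5) / (2 * w3))
    (hnint : (pco, qco) ∉ interior Fco) :
    ∃ x₀ ∈ Fco ∩ (L1 ∪ L2 ∪ L3 ∪ L4), ∀ x ∈ Fco, U x.1 x.2 ≤ U x₀.1 x₀.2 := by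
  let lin : ℝ → ℝ := fun p => (dj + ε * ai * p - aj * Cj - 2 * √(aj * Oj)) / aj
  have hθφ : ∀ p, min (θ p) (φ p) = min (lin p) (φ p) := fun p => by
    simpa only [hθ, hφ, hpsw] using min_responseCap_eq hai haj hOj hε0 p
  have hφ_cont : Continuous φ := by simp only [funext hφ]; fun_prop
  have hψ_cont : Continuous ψ := by simp only [funext hψ]; fun_prop
  have hφ_anti : Antitone φ := fun p p' hp => by simp only [hφ]; gcongr
  obtain rfl : Fco = cappedQuadrant (fun q => min pmx (ψ q)) fun p => min (lin p) (φ p) := by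
    simp only [hFco, hθφ, cappedQuadrant]
  have hcompact : IsCompact (cappedQuadrant (fun q => min pmx (ψ q)) fun p => min (lin p) (φ p)) :=
    cappedQuadrant.isCompact (by fun_prop) (by fun_prop) (fun q _ => min_le_left _ _)
      fun p hp => (min_le_right _ _).trans (hφ_anti hp)
  have hw4_pos : 0 < w4 := hw4 ▸ price_linearCoeff_pos hdi hdj hai haj hCi hCj hCS hε0 hε1
  have hsnd : ∀ p, p < min pmx (ψ 0) → 0 < min (lin p) (φ p) → 2 * w1 * p + w4 = 0 →
      0 < w2 * p + w5 := fun p hp hq hstat => by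
    have hpψ : p < ψ 0 := (lt_min_iff.1 hp).2
    have hlin : 0 < lin p := (lt_min_iff.1 hq).1
    have hdemand : 0 < dj + ε * ai * p - aj * Cj := by
      linarith [(div_pos_iff_of_pos_right haj).1 hlin, Real.sqrt_nonneg (aj * Oj)]
    subst hw1 hw2 hw4 hw5
    simp only [hψ, add_zero] at hpψ
    exact quantity_partial_pos hai haj hCS hε0 hε1 hpψ hdemand hstat
  obtain ⟨x, hx, hcap, hmax⟩ := cappedQuadrant.exists_isMaxOn_quadratic_eq_cap (by fun_prop)
    (by fun_prop) hcompact hne w6 hdisc (hw2 ▸ by positivity) (hw3 ▸ by simp [haj.ne']) hw4_pos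
    hsnd hpco hqco hnint
  refine ⟨x, ⟨hx, ?_⟩, fun y hy => by simp only [hU]; exact hmax hy⟩
  have hline : (x.1 = pmx ∨ x.1 = ψ x.2) ∨ (x.2 = lin x.1 ∨ x.2 = φ x.1) :=
    hcap.imp (fun h => (min_choice _ _).imp h.trans h.trans)
      fun h => (min_choice _ _).imp h.trans h.trans
  simp only [hL1, hL2, hL3, hL4, mem_union, mem_ofPred_eq]
  tauto

/-- Theorem 1(ii): under A.1, A.2 and nondegeneracy of the quadratic,
if the stationary point `(p*_co, q*_co)` does NOT lie in the interior of `F_co⁺`,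
then the maximum of `U` over `F_co⁺` is attained at a point of
`F_co⁺ ∩ (𝕃₁ ∪ 𝕃₂ ∪ 𝕃₃ ∪ 𝕃₄)`. -/
theorem stmt19 (di dj ai aj Ci Cj CS Oi Oj OS ε : ℝ)
    (hdi : 0 < di) (hdj : 0 < dj) (hai : 0 < ai) (haj : 0 < aj)
    (hCi : 0 < Ci) (hCj : 0 < Cj) (hCS : 0 < CS)
    (hOi : 0 < Oi) (hOj : 0 < Oj) (hOS : 0 < OS)
    (hε0 : 0 < ε) (hε1 : ε < 1)
    (hA1i : di ≥ ai * (CS + Ci) + 2 * Real.sqrt (ai * (OS + Oi)))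
    (hA1j : dj ≥ aj * (CS + Cj)
        + 2 * max (Real.sqrt (2 * aj * (OS + Oi))) (Real.sqrt (aj * Oj)))
    (hA2 : ε ≤ 2 * Real.sqrt (aj * Oj) / (aj * Ci))
    (w1 w2 w3 w4 w5 w6 : ℝ)
    (hw1 : w1 = -(ai * (2 - ε ^ 2)) / 2)
    (hw2 : w2 = ε * (ai + aj) / 2)
    (hw3 : w3 = -aj / 2)
    (hw4 : w4 = (2 * di + ε * dj + ε * aj * Cj - ε * ai * CS
        + ai * (2 - ε ^ 2) * (Ci + CS)) / 2)
    (hw5 : w5 = (dj - aj * Cj + aj * CS - ε * aj * (Ci + CS)) / 2)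
    (hw6 : w6 = -(di + ε * (dj + aj * Cj) / 2) * (Ci + CS)
        - (dj - aj * Cj) / 2 * CS - Oi - OS)
    (hdisc : 4 * w1 * w3 - w2 ^ 2 ≠ 0)
    (pmx psw : ℝ)
    (hpmx : pmx = (di + ε * dj) / ai)
    (hpsw : psw = di / ai + Real.sqrt (aj * Oj) / (ε * ai))
    (θ φ ψ : ℝ → ℝ)
    (hθ : ∀ p, θ p =
      if p < psw then (dj + ε * ai * p - aj * Cj - 2 * Real.sqrt (aj * Oj)) / aj
      else (dj + ε * di - aj * Cj) / aj - Oj / (ε * ai * p - ε * di))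
    (hφ : ∀ p, φ p = (dj + 2 * ε * di - ε * ai * p - aj * Cj) / aj)
    (hψ : ∀ q, ψ q = (2 * di + ε * dj + ε * aj * (Cj + q)) / ((2 - ε ^ 2) * ai))
    (U : ℝ → ℝ → ℝ)
    (hU : ∀ p q, U p q = w1 * p ^ 2 + w2 * p * q + w3 * q ^ 2 + w4 * p + w5 * q + w6)
    (Fco : Set (ℝ × ℝ))
    (hFco : Fco = {x : ℝ × ℝ | 0 ≤ x.1 ∧ 0 ≤ x.2 ∧
      x.1 ≤ min pmx (ψ x.2) ∧ x.2 ≤ min (θ x.1) (φ x.1)})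
    (L1 L2 L3 L4 : Set (ℝ × ℝ))
    (hL1 : L1 = {x : ℝ × ℝ | x.2 = φ x.1})
    (hL2 : L2 = {x : ℝ × ℝ | x.1 = ψ x.2})
    (hL3 : L3 = {x : ℝ × ℝ |
      x.2 = (dj + ε * ai * x.1 - aj * Cj - 2 * Real.sqrt (aj * Oj)) / aj})
    (hL4 : L4 = {x : ℝ × ℝ | x.1 = pmx})
    (pco qco : ℝ)
    (hpco : pco = -(2 * w3 * w4 - w2 * w5) / (4 * w1 * w3 - w2 ^ 2))
    (hqco : qco = -(w2 * pco + w5) / (2 * w3))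
    (hnint : (pco, qco) ∉ interior Fco) :
    ∃ x₀ ∈ Fco ∩ (L1 ∪ L2 ∪ L3 ∪ L4), ∀ x ∈ Fco, U x.1 x.2 ≤ U x₀.1 x₀.2 :=
  stmt19_general di dj ai aj Ci Cj CS Oj ε hdi hdj hai haj hCi hCj hCS hOj hε0 hε1.le
    w1 w2 w3 w4 w5 w6 hw1 hw2 hw3 hw4 hw5 hdisc pmx psw hpsw θ φ ψ hθ hφ hψ U hU Fco hFco
    (hFco ▸ feasible_nonempty hdi hdj hai haj hCj hε0 (by nlinarith)
      (by linarith [le_max_right √(2 * aj * (OS + Oi)) √(aj * Oj), mul_pos haj hCS])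
      hpmx hpsw hθ hφ hψ)
    L1 L2 L3 L4 hL1 hL2 hL3 hL4 pco qco hpco hqco hnint
end
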